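/- arXiv:1811.00049 — 3 statements merged into one kernel-verified Lean document; each statement's English description precedes it below -/
import Mathlib

section
/- Let L₀ ≤ μ_{q^n+1}, L₁ ≤ S_ℓ × C_m and L̄ ≤ M_ℓ be subgroups satisfying ρ̄(L̄) = L₀^m (where L₀^m := {ξ^m : ξ ∈ L₀}), L̄ ∩ S_ℓ = π(L₁), and ρ(L₁) = L₀ ∩ μ_m. Assume moreover that L₁ ∩ C_m = {diag(1,1,ξ) : ξ ∈ L₀ ∩ μ_m}. Then there exists a subgroup L ≤ G such that ρ(L) = L₀, L ∩ (S_ℓ × C_m) = L₁, and π(L) = L̄. -/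
/-!
Write `D ξ = diag(1,1,ξ)`. Every `N ∈ L̄` is block diagonal with lower right entry `1`, so it
commutes with every `D ξ`, and it is determined by a pair `(a, c)` together with `det N`
(`exists_form`). The group `L` is the set of products `N * D ξ` with `N ∈ L̄`, `ξ ∈ L₀` and
`det N = ξ ^ m`, that is, the image of the fibre product of `L̄` and `L₀` over their common
image `ρ̄(L̄) = L₀ ^ m`. The determinant condition says precisely that `N * D ξ` lies in `G`, and
the equality of the two images makes both projections of the fibre product surjective, which
gives `ρ(L) = L₀` and `π(L) = L̄`.

If `N * D ξ ∈ L` has `ξ ^ m = 1`, then `N ∈ L̄ ∩ S_ℓ = π(L₁)`, so `N * D ξ = l * D (ξ / ρ(l))` for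
some `l ∈ L₁`; here `ξ / ρ(l) ∈ L₀ ∩ μ_m`, so the assumption on `L₁ ∩ C_m` puts the second factor
in `L₁`. This gives `L ∩ (S_ℓ × C_m) = L₁`.
-/

open Matrix

/-- The map `ρ` extracting the `(3,3)` entry of a matrix in `G`. -/
def rhoFun {E : Type*} [Field E] (M : GL (Fin 3) E) : E :=
  (M : Matrix (Fin 3) (Fin 3) E) 2 2

/-- The map `π`, sending `M = α_{a,c,ξ}` to `M · diag(1,1,ξ)⁻¹`,
i.e. replacing the `(3,3)` entry by `1`. -/
def piMat {E : Type*} [Field E] (M : GL (Fin 3) E) : Matrix (Fin 3) (Fin 3) E :=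
  (M : Matrix (Fin 3) (Fin 3) E) *
    Matrix.diagonal ![1, 1, ((M : Matrix (Fin 3) (Fin 3) E) 2 2)⁻¹]

/-- The carrier of `G = Aut(K_n)` as a set of invertible matrices. -/
def GSet (q n m : ℕ) {E : Type*} [Field E] (F : Subfield E) : Set (GL (Fin 3) E) :=
  {M | ∃ a c ξ : E, a ∈ F ∧ c ∈ F ∧ a ^ (q + 1) - c ^ (q + 1) = 1 ∧
    ξ ^ (q ^ n + 1) = 1 ∧
    (M : Matrix (Fin 3) (Fin 3) E)
      = !![a, c ^ q * ξ ^ m, 0; c, a ^ q * ξ ^ m, 0; 0, 0, ξ]}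

/-- The carrier of `S_ℓ ≅ SL(2,q)`, as a set of matrices. -/
def SMat (q : ℕ) {E : Type*} [Field E] (F : Subfield E) : Set (Matrix (Fin 3) (Fin 3) E) :=
  {A | ∃ a c : E, a ∈ F ∧ c ∈ F ∧ a ^ (q + 1) - c ^ (q + 1) = 1 ∧
    A = !![a, c ^ q, 0; c, a ^ q, 0; 0, 0, 1]}

/-- The carrier of `S_ℓ × C_m = {α_{a,c,ξ} ∈ G : ξ^m = 1}`. -/
def SCmSet (q n m : ℕ) {E : Type*} [Field E] (F : Subfield E) : Set (GL (Fin 3) E) :=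
  {M | M ∈ GSet q n m F ∧ rhoFun M ^ m = 1}

/-- The carrier of `C_m = ker π = {diag(1,1,ξ) : ξ^m = 1}`. -/
def CmSet (m : ℕ) {E : Type*} [Field E] : Set (GL (Fin 3) E) :=
  {M | ∃ ξ : E, ξ ^ m = 1 ∧
    (M : Matrix (Fin 3) (Fin 3) E) = Matrix.diagonal ![1, 1, ξ]}

/-- The set `μ_k` of `k`-th roots of unity in `E`. -/
def muSet (k : ℕ) (E : Type*) [Field E] : Set E := {ξ | ξ ^ k = 1}

/-- The homomorphism `ξ ↦ diag(1,1,ξ)`. -/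
def diagHom (E : Type*) [Field E] : Eˣ →* GL (Fin 3) E where
  toFun ξ :=
    { val := Matrix.diagonal ![1, 1, (ξ : E)]
      inv := Matrix.diagonal ![1, 1, ((ξ⁻¹ : Eˣ) : E)]
      val_inv := by
        rw [Matrix.diagonal_mul_diagonal, ← Matrix.diagonal_one]
        congr 1; ext i; fin_cases i <;> simp
      inv_val := by
        rw [Matrix.diagonal_mul_diagonal, ← Matrix.diagonal_one]
        congr 1; ext i; fin_cases i <;> simp }
  map_one' := by
    ext i j
    fin_cases i <;> fin_cases j <;> simp [Matrix.diagonal]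
  map_mul' x y := by
    apply Units.ext
    simp only [Units.val_mul, Matrix.diagonal_mul_diagonal]
    congr 1; ext i; fin_cases i <;> simp

theorem coe_diagHom {E : Type*} [Field E] (ξ : Eˣ) :
    (diagHom E ξ : Matrix (Fin 3) (Fin 3) E) = Matrix.diagonal ![1, 1, (ξ : E)] := rfl

theorem piMat_eq {E : Type*} [Field E] (M : GL (Fin 3) E) (u : Eˣ) (hu : rhoFun M = u) :
    piMat M = ((M * (diagHom E u)⁻¹ : GL (Fin 3) E) : Matrix (Fin 3) (Fin 3) E) := by
  rw [← map_inv, Units.val_mul, coe_diagHom, Units.val_inv_eq_inv_val, ← hu]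
  rfl

/-- Elements of `π(G)` in terms of `a`, `c` and the determinant; the parameter `ξ` of a preimage
enters only through `ξ ^ m = det N`. -/
theorem exists_form {q n m : ℕ} {E : Type*} [Field E] {F : Subfield E}
    {N : GL (Fin 3) E}
    (hN : ∃ M ∈ GSet q n m F, (N : Matrix (Fin 3) (Fin 3) E) = piMat M) :
    ∃ a c : E, a ∈ F ∧ c ∈ F ∧ a ^ (q + 1) - c ^ (q + 1) = 1 ∧
      (N : Matrix (Fin 3) (Fin 3) E)
        = !![a, c ^ q * (N : Matrix (Fin 3) (Fin 3) E).det, 0;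
             c, a ^ q * (N : Matrix (Fin 3) (Fin 3) E).det, 0; 0, 0, 1] := by
  obtain ⟨M, ⟨a, c, ξ, ha, hc, hac, hξ, hM⟩, hNM⟩ := hN
  have hξ0 : ξ ≠ 0 := by
    rintro rfl
    simp at hξ
  have hform : (N : Matrix (Fin 3) (Fin 3) E)
      = !![a, c ^ q * ξ ^ m, 0; c, a ^ q * ξ ^ m, 0; 0, 0, 1] := by
    rw [hNM, piMat, hM]
    ext i j
    fin_cases i <;> fin_cases j <;> simp [Matrix.mul_diagonal, hξ0]
  have hdet : (N : Matrix (Fin 3) (Fin 3) E).det = ξ ^ m := by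
    rw [hform, Matrix.det_fin_three]
    simp
    linear_combination ξ ^ m * hac
  exact ⟨a, c, ha, hc, hac, by rw [hdet]; exact hform⟩

theorem commute_diagHom {q n m : ℕ} {E : Type*} [Field E] {F : Subfield E}
    {N : GL (Fin 3) E}
    (hN : ∃ M ∈ GSet q n m F, (N : Matrix (Fin 3) (Fin 3) E) = piMat M) (ξ : Eˣ) :
    N * diagHom E ξ = diagHom E ξ * N := by
  obtain ⟨a, c, -, -, -, h⟩ := exists_form hN
  apply Units.ext
  rw [Units.val_mul, Units.val_mul, coe_diagHom, h]
  ext i j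
  fin_cases i <;> fin_cases j <;> simp [Matrix.mul_diagonal, Matrix.diagonal_mul]

theorem mul_diagHom_mem_GSet {q n m : ℕ} {E : Type*} [Field E] {F : Subfield E}
    {N : GL (Fin 3) E}
    (hN : ∃ M ∈ GSet q n m F, (N : Matrix (Fin 3) (Fin 3) E) = piMat M) (ξ : Eˣ)
    (hd : (N : Matrix (Fin 3) (Fin 3) E).det = (ξ : E) ^ m)
    (hξ : (ξ : E) ^ (q ^ n + 1) = 1) :
    N * diagHom E ξ ∈ GSet q n m F := by
  obtain ⟨a, c, ha, hc, hac, h⟩ := exists_form hN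
  refine ⟨a, c, ξ, ha, hc, hac, hξ, ?_⟩
  rw [Units.val_mul, coe_diagHom, h, hd]
  ext i j
  fin_cases i <;> fin_cases j <;> simp [Matrix.mul_diagonal]

theorem rhoFun_mul_diagHom {q n m : ℕ} {E : Type*} [Field E] {F : Subfield E}
    {N : GL (Fin 3) E}
    (hN : ∃ M ∈ GSet q n m F, (N : Matrix (Fin 3) (Fin 3) E) = piMat M) (ξ : Eˣ) :
    rhoFun (N * diagHom E ξ) = ξ := by
  obtain ⟨a, c, -, -, -, h⟩ := exists_form hN
  rw [rhoFun, Units.val_mul, coe_diagHom, h]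
  simp [Matrix.mul_diagonal]

theorem piMat_mul_diagHom {q n m : ℕ} {E : Type*} [Field E] {F : Subfield E}
    {N : GL (Fin 3) E}
    (hN : ∃ M ∈ GSet q n m F, (N : Matrix (Fin 3) (Fin 3) E) = piMat M) (ξ : Eˣ) :
    piMat (N * diagHom E ξ) = N := by
  rw [piMat_eq _ ξ (rhoFun_mul_diagHom hN ξ), mul_inv_cancel_right]

theorem det_of_mem_SMat {q : ℕ} {E : Type*} [Field E] {F : Subfield E}
    {A : Matrix (Fin 3) (Fin 3) E} (hA : A ∈ SMat q F) : A.det = 1 := by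
  obtain ⟨a, c, -, -, hac, rfl⟩ := hA
  rw [Matrix.det_fin_three]
  simp
  linear_combination hac

theorem stmt1 (p h n q m : ℕ) (hp : p.Prime) (hh : 1 ≤ h) (hq : q = p ^ h)
    (hn1 : 1 ≤ n) (hodd : Odd n) (hm : m * (q + 1) = q ^ n + 1)
    {E : Type*} [Field E] [Fintype E] (hE : Fintype.card E = q ^ (2 * n))
    (F : Subfield E) (hF : Nat.card F = q ^ 2)
    (L₀ : Subgroup Eˣ) (hL₀ : ∀ ξ ∈ L₀, (ξ : E) ^ (q ^ n + 1) = 1)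
    (L₁ : Subgroup (GL (Fin 3) E))
    (hL₁ : (L₁ : Set (GL (Fin 3) E)) ⊆ SCmSet q n m F)
    (Lb : Subgroup (GL (Fin 3) E))
    (hLb : ∀ N ∈ Lb, ∃ M ∈ GSet q n m F, (N : Matrix (Fin 3) (Fin 3) E) = piMat M)
    (h1 : (fun N : GL (Fin 3) E => (N : Matrix (Fin 3) (Fin 3) E).det)
          '' (Lb : Set (GL (Fin 3) E))
        = (fun ξ : Eˣ => (ξ : E) ^ m) '' (L₀ : Set Eˣ))
    (h2 : ((fun N : GL (Fin 3) E => (N : Matrix (Fin 3) (Fin 3) E))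
          '' (Lb : Set (GL (Fin 3) E))) ∩ SMat q F
        = piMat '' (L₁ : Set (GL (Fin 3) E)))
    (h3 : rhoFun '' (L₁ : Set (GL (Fin 3) E))
        = (Units.val '' (L₀ : Set Eˣ)) ∩ muSet m E)
    (h4 : (fun N : GL (Fin 3) E => (N : Matrix (Fin 3) (Fin 3) E))
          '' ((L₁ : Set (GL (Fin 3) E)) ∩ CmSet m)
        = (fun ξ : Eˣ => Matrix.diagonal ![1, 1, (ξ : E)])
          '' {ξ ∈ (L₀ : Set Eˣ) | (ξ : E) ∈ muSet m E}) :
    ∃ L : Subgroup (GL (Fin 3) E),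
      (L : Set (GL (Fin 3) E)) ⊆ GSet q n m F ∧
      rhoFun '' (L : Set (GL (Fin 3) E)) = Units.val '' (L₀ : Set Eˣ) ∧
      (L : Set (GL (Fin 3) E)) ∩ SCmSet q n m F = (L₁ : Set (GL (Fin 3) E)) ∧
      piMat '' (L : Set (GL (Fin 3) E))
        = (fun N : GL (Fin 3) E => (N : Matrix (Fin 3) (Fin 3) E))
          '' (Lb : Set (GL (Fin 3) E)) := by
  let L : Subgroup (GL (Fin 3) E) :=
    { carrier := {M | ∃ N ∈ Lb, ∃ ξ ∈ L₀,
        (N : Matrix (Fin 3) (Fin 3) E).det = (ξ : E) ^ m ∧ M = N * diagHom E ξ}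
      one_mem' := ⟨1, Lb.one_mem, 1, L₀.one_mem, by simp, by simp⟩
      mul_mem' := by
        rintro _ _ ⟨N, hN, ξ, hξ, hd, rfl⟩ ⟨N', hN', ξ', hξ', hd', rfl⟩
        refine ⟨N * N', Lb.mul_mem hN hN', ξ * ξ', L₀.mul_mem hξ hξ', ?_, ?_⟩
        · rw [Units.val_mul, Matrix.det_mul, hd, hd', Units.val_mul, mul_pow]
        · rw [map_mul, mul_assoc, ← mul_assoc (diagHom E ξ), ← commute_diagHom (hLb N' hN') ξ]
          simp only [mul_assoc]
      inv_mem' := by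
        rintro _ ⟨N, hN, ξ, hξ, hd, rfl⟩
        refine ⟨N⁻¹, Lb.inv_mem hN, ξ⁻¹, L₀.inv_mem hξ, ?_, ?_⟩
        · rw [Matrix.coe_units_inv, Matrix.det_nonsing_inv, Ring.inverse_eq_inv', hd,
            Units.val_inv_eq_inv_val, inv_pow]
        · rw [commute_diagHom (hLb N hN) ξ, _root_.mul_inv_rev, map_inv] }
  refine ⟨L, ?_, ?_, ?_, ?_⟩
  · rintro _ ⟨N, hN, ξ, hξ, hd, rfl⟩
    exact mul_diagHom_mem_GSet (hLb N hN) ξ hd (hL₀ ξ hξ)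
  · ext x
    constructor
    · rintro ⟨_, ⟨N, hN, ξ, hξ, hd, rfl⟩, rfl⟩
      exact ⟨ξ, hξ, (rhoFun_mul_diagHom (hLb N hN) ξ).symm⟩
    · rintro ⟨ξ, hξ, rfl⟩
      obtain ⟨N, hN, hd⟩ := h1.symm.subset ⟨ξ, hξ, rfl⟩
      exact ⟨_, ⟨N, hN, ξ, hξ, hd, rfl⟩, rhoFun_mul_diagHom (hLb N hN) ξ⟩
  · ext M
    constructor
    · rintro ⟨⟨N, hN, ξ, hξ, hd, rfl⟩, -, hr⟩
      rw [rhoFun_mul_diagHom (hLb N hN) ξ] at hr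
      have hS : (N : Matrix (Fin 3) (Fin 3) E) ∈ SMat q F := by
        obtain ⟨a, c, ha, hc, hac, hf⟩ := exists_form (hLb N hN)
        refine ⟨a, c, ha, hc, hac, ?_⟩
        rw [hd, hr, mul_one, mul_one] at hf
        exact hf
      obtain ⟨l, hl, hlN⟩ := h2.subset ⟨⟨N, hN, rfl⟩, hS⟩
      obtain ⟨⟨ζ, hζ, hζl⟩, hζm⟩ := h3.subset ⟨l, hl, rfl⟩
      rw [← hζl] at hζm
      have hζm' : (ζ : E) ^ m = 1 := hζm
      obtain ⟨d, ⟨hd1, -⟩, hd2⟩ := h4.symm.subset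
        ⟨ζ⁻¹ * ξ, ⟨L₀.mul_mem (L₀.inv_mem hζ) hξ, by
          simp [muSet, mul_pow, hr, hζm']⟩, rfl⟩
      have hdd : d = diagHom E (ζ⁻¹ * ξ) := Units.ext hd2
      rw [piMat_eq l ζ hζl.symm] at hlN
      have hNl : N = l * (diagHom E ζ)⁻¹ := Units.ext hlN.symm
      have : N * diagHom E ξ = l * d := by
        rw [hNl, hdd, map_mul, map_inv, mul_assoc]
      rw [this]
      exact L₁.mul_mem hl hd1
    · intro hM
      obtain ⟨⟨ζ, hζ, hζl⟩, hζm⟩ := h3.subset ⟨M, hM, rfl⟩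
      rw [← hζl] at hζm
      have hζm' : (ζ : E) ^ m = 1 := hζm
      obtain ⟨⟨N, hN, hNM⟩, hS⟩ := h2.symm.subset ⟨M, hM, rfl⟩
      have hNM' : (N : Matrix (Fin 3) (Fin 3) E) = piMat M := hNM
      refine ⟨⟨N, hN, ζ, hζ, ?_, ?_⟩, hL₁ hM⟩
      · rw [hζm', hNM', det_of_mem_SMat hS]
      · rw [piMat_eq M ζ hζl.symm] at hNM'
        rw [Units.ext hNM', inv_mul_cancel_right]
  · ext A
    constructor
    · rintro ⟨_, ⟨N, hN, ξ, hξ, hd, rfl⟩, rfl⟩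
      exact ⟨N, hN, (piMat_mul_diagHom (hLb N hN) ξ).symm⟩
    · rintro ⟨N, hN, rfl⟩
      obtain ⟨ξ, hξ, hd⟩ := h1.subset ⟨N, hN, rfl⟩
      exact ⟨_, ⟨N, hN, ξ, hξ, hd.symm, rfl⟩, piMat_mul_diagHom (hLb N hN) ξ⟩
end

section
/- Let L̄ ≤ M_ℓ be a subgroup and set s := |ρ̄(L̄)|. Let L ≤ G be a subgroup with π(L) = L̄, and set L_m := L ∩ C_m. If gcd(s, m/|L_m|) = 1, then there exists a subgroup L̃ ≤ G such that π(L̃) = L̄, ρ(L̃) is the unique subgroup of μ_{q^n+1} of order s·|L_m|, and |L̃ ∩ C_m| = |L_m|. -/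
/-!
The group `C_m` commutes with `π(G)`, and an element of `G` is determined by its image
`N = π(g)` and by `ξ = ρ(g)`, which is subject only to `ξ ^ m = det N`. Put
`L̃ = {g ∈ G : π(g) ∈ L̄, ρ(g) ^ (s · |L_m|) = 1}`.

Write `k = m / |L_m|`, which is coprime to `s`.
* `π(L̃) = L̄`: if `N = π(g)` and `ξ = ρ(g)`, then `ξ ^ m = det N ∈ μ_s`. By coprimality there is
  `e ≡ 1 mod s` with `k ∣ e`; then `ξ ^ e` has the same `m`-th power as `ξ`, and it is killed by
  `s · |L_m|` because `m ∣ e · |L_m|` (`exists_adjust`).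
* `ρ(L̃) = μ_{s |L_m|}`: if `ξ ∈ μ_{s |L_m|}`, then `ξ ^ m ∈ μ_s`, and `μ_s` is the whole of
  `ρ̄(L̄)`, a subgroup of `Eˣ` of order `s` (`mem_iff_pow_card`). So `ξ ^ m = det N` for some `N ∈ L̄`.
* `L̃ ∩ C_m` consists of the `diag(1,1,ξ)` with `ξ` killed by `m` and by `s · |L_m|`; the gcd of
  these is `|L_m|`, so this is `L_m` itself, the only subgroup of that order in a cyclic group.
-/

open Matrix

/-- The embedding `ξ ↦ diag(1,1,ξ)` of `Eˣ` into `GL(3,E)`. -/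
def dg {E : Type*} [Field E] : Eˣ →* GL (Fin 3) E where
  toFun u := ⟨Matrix.diagonal ![1, 1, (u : E)], Matrix.diagonal ![1, 1, ((u⁻¹ : Eˣ) : E)],
    by ext i j; fin_cases i <;> fin_cases j <;> simp,
    by ext i j; fin_cases i <;> fin_cases j <;> simp⟩
  map_one' := by
    ext i j; fin_cases i <;> fin_cases j <;> simp
  map_mul' u v := by
    ext i j; fin_cases i <;> fin_cases j <;> simp

theorem dg_val {E : Type*} [Field E] (u : Eˣ) :
    ((dg u : GL (Fin 3) E) : Matrix (Fin 3) (Fin 3) E) = Matrix.diagonal ![1, 1, (u : E)] := rfl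

theorem dg_inj {E : Type*} [Field E] : Function.Injective (dg : Eˣ → GL (Fin 3) E) := by
  intro u v huv
  have := congrArg (fun M : GL (Fin 3) E => (M : Matrix (Fin 3) (Fin 3) E) 2 2) huv
  simp only [dg_val] at this
  ext
  simpa using this

/-- A finite subgroup of order `k` of the unit group of a field is the full group of `k`-th roots
of unity. -/
theorem mem_iff_pow_card {E : Type*} [Field E] [Finite E] (H : Subgroup Eˣ) (u : Eˣ) :
    u ∈ H ↔ u ^ Nat.card H = 1 := by
  have hpos : 0 < Nat.card H := Nat.card_pos
  have : NeZero (Nat.card H) := ⟨hpos.ne'⟩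
  have hle : H ≤ rootsOfUnity (Nat.card H) E := by
    intro v hv
    rw [mem_rootsOfUnity]
    exact congrArg Subtype.val (pow_card_eq_one' (x := (⟨v, hv⟩ : H)))
  have hcard : Nat.card (rootsOfUnity (Nat.card H) E) ≤ Nat.card H :=
    card_rootsOfUnity E _
  have heq := Subgroup.eq_of_le_of_card_ge hle hcard
  rw [← mem_rootsOfUnity, ← heq]

theorem card_dvd_of_pow {E : Type*} [Field E] [Finite E] (H : Subgroup Eˣ) (m : ℕ)
    (h : ∀ u ∈ H, u ^ m = 1) : Nat.card H ∣ m := by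
  rw [← IsCyclic.exponent_eq_card]
  refine Monoid.exponent_dvd_of_forall_pow_eq_one fun g => ?_
  ext
  simpa using congrArg Units.val (h g g.2)

/-- The shape of `N = π(α_{a,c,ξ})`; here `det N = ξ ^ m`. -/
theorem pi_form {E : Type*} [Field E] {q n m : ℕ} {F : Subfield E} {N : GL (Fin 3) E}
    (h : ∃ M ∈ GSet q n m F, (N : Matrix (Fin 3) (Fin 3) E) = piMat M) :
    ∃ (a c : E) (ξ : Eˣ), a ∈ F ∧ c ∈ F ∧ a ^ (q + 1) - c ^ (q + 1) = 1 ∧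
      ξ ^ (q ^ n + 1) = 1 ∧
      (N : Matrix (Fin 3) (Fin 3) E)
        = !![a, c ^ q * (ξ : E) ^ m, 0; c, a ^ q * (ξ : E) ^ m, 0; 0, 0, 1] ∧
      (N : Matrix (Fin 3) (Fin 3) E).det = (ξ : E) ^ m := by
  obtain ⟨M, ⟨a, c, ξ, ha, hc, hac, hξ, hM⟩, hN⟩ := h
  have hξ0 : ξ ≠ 0 := by
    rintro rfl
    simp at hξ
  have hN' : (N : Matrix (Fin 3) (Fin 3) E)
        = !![a, c ^ q * ξ ^ m, 0; c, a ^ q * ξ ^ m, 0; 0, 0, 1] := by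
    rw [hN, piMat, hM]
    ext i j
    fin_cases i <;> fin_cases j <;> simp [hξ0]
  refine ⟨a, c, Units.mk0 ξ hξ0, ha, hc, hac, ?_, hN', ?_⟩
  · ext
    simpa using hξ
  · rw [hN', Matrix.det_fin_three]
    simp
    linear_combination ξ ^ m * hac

theorem pi_comm {E : Type*} [Field E] {q n m : ℕ} {F : Subfield E} {N : GL (Fin 3) E}
    (h : ∃ M ∈ GSet q n m F, (N : Matrix (Fin 3) (Fin 3) E) = piMat M) (u : Eˣ) :
    Commute N (dg u) := by
  obtain ⟨a, c, ξ, -, -, -, -, hN, -⟩ := pi_form h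
  apply Units.ext
  simp only [Units.val_mul, hN, dg_val]
  ext i j
  fin_cases i <;> fin_cases j <;> simp

theorem rho_mul {E : Type*} [Field E] {q n m : ℕ} {F : Subfield E} {N : GL (Fin 3) E}
    (h : ∃ M ∈ GSet q n m F, (N : Matrix (Fin 3) (Fin 3) E) = piMat M) (u : Eˣ) :
    rhoFun (N * dg u) = u := by
  obtain ⟨a, c, ξ, -, -, -, -, hN, -⟩ := pi_form h
  simp [rhoFun, hN, dg_val]

theorem pi_mul {E : Type*} [Field E] {q n m : ℕ} {F : Subfield E} {N : GL (Fin 3) E}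
    (h : ∃ M ∈ GSet q n m F, (N : Matrix (Fin 3) (Fin 3) E) = piMat M) (u : Eˣ) :
    piMat (N * dg u) = N := by
  have h1 := rho_mul h u
  rw [rhoFun] at h1
  rw [piMat, h1]
  have : (Matrix.diagonal ![1, 1, (u : E)⁻¹]) = ((dg u⁻¹ : GL (Fin 3) E) : Matrix _ _ E) := by
    rw [dg_val, Units.val_inv_eq_inv_val]
  rw [this, ← Units.val_mul, mul_assoc, ← map_mul]
  simp

/-- `N · diag(1,1,u)` lies in `G` as soon as `u` satisfies the constraint `u ^ m = det N`. -/
theorem mul_mem_GSet {E : Type*} [Field E] {q n m : ℕ} {F : Subfield E} {N : GL (Fin 3) E}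
    (hm : m * (q + 1) = q ^ n + 1)
    (h : ∃ M ∈ GSet q n m F, (N : Matrix (Fin 3) (Fin 3) E) = piMat M) (u : Eˣ)
    (hu : u ^ m = Matrix.GeneralLinearGroup.det N) :
    N * dg u ∈ GSet q n m F := by
  obtain ⟨a, c, ξ, ha, hc, hac, hξ, hN, hdet⟩ := pi_form h
  have huξ : (u : E) ^ m = (ξ : E) ^ m := by
    rw [← hdet]
    simpa using congrArg Units.val hu
  refine ⟨a, c, u, ha, hc, hac, ?_, ?_⟩
  · rw [← hm, pow_mul, huξ, ← pow_mul, hm]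
    simpa using congrArg Units.val hξ
  · rw [huξ, Units.val_mul, hN, dg_val]
    ext i j
    fin_cases i <;> fin_cases j <;> simp

/-- The group of all `N · diag(1,1,u)` with `N ∈ L̄`, `u ^ m = det N` and `u ^ r = 1`. For
`L̄ ≤ π(G)` this is the group of all `g ∈ G` with `π(g) ∈ L̄` and `ρ(g) ∈ μ_r`. -/
def liftGroup {E : Type*} [Field E] (m r : ℕ) (Lb : Subgroup (GL (Fin 3) E))
    (hc : ∀ N ∈ Lb, ∀ u : Eˣ, Commute N (dg u)) : Subgroup (GL (Fin 3) E) where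
  carrier := {g | ∃ N ∈ Lb, ∃ u : Eˣ, u ^ m = Matrix.GeneralLinearGroup.det N ∧ u ^ r = 1 ∧
    g = N * dg u}
  one_mem' := ⟨1, Lb.one_mem, 1, by simp, by simp, by simp⟩
  mul_mem' := by
    rintro _ _ ⟨N, hN, u, hu, hur, rfl⟩ ⟨N', hN', u', hu', hur', rfl⟩
    refine ⟨N * N', Lb.mul_mem hN hN', u * u', by rw [mul_pow, hu, hu', map_mul],
      by rw [mul_pow, hur, hur', mul_one], ?_⟩
    rw [map_mul, mul_assoc, mul_assoc, ← mul_assoc (dg u), ← (hc N' hN' u).eq, mul_assoc]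
  inv_mem' := by
    rintro _ ⟨N, hN, u, hu, hur, rfl⟩
    refine ⟨N⁻¹, Lb.inv_mem hN, u⁻¹, by rw [inv_pow, hu, map_inv],
      by rw [inv_pow, hur, inv_one], ?_⟩
    rw [(hc N hN u).eq, _root_.mul_inv_rev, map_inv]

/-- With `m = l * k` and `s` coprime to `k`: if `u ^ m` is killed by `s`, then some `v` killed by
`s * l` has the same `m`-th power as `u`. -/
theorem exists_adjust {A : Type*} [CommGroup A] (l k s : ℕ)
    (hsk : Nat.Coprime s k) (u : A) (hu : (u ^ (l * k)) ^ s = 1) :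
    ∃ v : A, v ^ (l * k) = u ^ (l * k) ∧ v ^ (s * l) = 1 := by
  have hb : (s : ℤ) * Nat.gcdA s k + k * Nat.gcdB s k = 1 := by
    rw [← Nat.gcd_eq_gcd_ab, hsk]
    rfl
  set x := Nat.gcdA s k
  set y := Nat.gcdB s k
  have hu' : u ^ ((l : ℤ) * k * s) = 1 := by
    rw [← hu, ← pow_mul, ← zpow_natCast]
    push_cast
    rfl
  -- The exponent `k * y` is congruent to `1` modulo `s` and to `0` modulo `k`.
  refine ⟨u ^ ((k : ℤ) * y), ?_, ?_⟩
  · rw [← zpow_natCast, ← zpow_natCast, ← _root_.zpow_mul]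
    have : (k : ℤ) * y * ((l * k : ℕ) : ℤ)
        = ((l * k : ℕ) : ℤ) + ((l : ℤ) * k * s) * (-x) := by
      push_cast
      linear_combination (l : ℤ) * k * hb
    rw [this, _root_.zpow_add, _root_.zpow_mul u ((l : ℤ) * k * s), hu', _root_.one_zpow, mul_one]
  · rw [← zpow_natCast, ← _root_.zpow_mul]
    have : (k : ℤ) * y * ((s * l : ℕ) : ℤ) = ((l : ℤ) * k * s) * y := by
      push_cast
      ring
    rw [this, _root_.zpow_mul, hu', _root_.one_zpow]

theorem mem_CmSet_iff {E : Type*} [Field E] {m : ℕ} (hm0 : m ≠ 0) (M : GL (Fin 3) E) :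
    M ∈ CmSet m ↔ ∃ u : Eˣ, u ^ m = 1 ∧ dg u = M := by
  constructor
  · rintro ⟨ξ, hξ, hM⟩
    have hξ0 : ξ ≠ 0 := by
      rintro rfl
      simp [hm0] at hξ
    refine ⟨Units.mk0 ξ hξ0, ?_, ?_⟩
    · ext
      simpa using hξ
    · apply Units.ext
      rw [hM, dg_val]
      rfl
  · rintro ⟨u, hu, rfl⟩
    exact ⟨u, by simpa using congrArg Units.val hu, rfl⟩

theorem stmt3 (p h n q m s lm : ℕ) (hp : p.Prime) (hh : 1 ≤ h) (hq : q = p ^ h)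
    (hn1 : 1 ≤ n) (hodd : Odd n) (hm : m * (q + 1) = q ^ n + 1)
    {E : Type*} [Field E] [Fintype E] (hE : Fintype.card E = q ^ (2 * n))
    (F : Subfield E) (hF : Nat.card F = q ^ 2)
    (Lb : Subgroup (GL (Fin 3) E))
    (hLb : ∀ N ∈ Lb, ∃ M ∈ GSet q n m F, (N : Matrix (Fin 3) (Fin 3) E) = piMat M)
    (hs : Nat.card ((fun N : GL (Fin 3) E => (N : Matrix (Fin 3) (Fin 3) E).det)
        '' (Lb : Set (GL (Fin 3) E)) : Set E) = s)
    (L : Subgroup (GL (Fin 3) E)) (hLG : (L : Set (GL (Fin 3) E)) ⊆ GSet q n m F)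
    (hπL : piMat '' (L : Set (GL (Fin 3) E))
      = (fun N : GL (Fin 3) E => (N : Matrix (Fin 3) (Fin 3) E))
        '' (Lb : Set (GL (Fin 3) E)))
    (hlm : Nat.card ((L : Set (GL (Fin 3) E)) ∩ CmSet m : Set (GL (Fin 3) E)) = lm)
    (hgcd : Nat.gcd s (m / lm) = 1) :
    ∃ Lt : Subgroup (GL (Fin 3) E),
      (Lt : Set (GL (Fin 3) E)) ⊆ GSet q n m F ∧
      piMat '' (Lt : Set (GL (Fin 3) E))
        = (fun N : GL (Fin 3) E => (N : Matrix (Fin 3) (Fin 3) E))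
          '' (Lb : Set (GL (Fin 3) E)) ∧
      rhoFun '' (Lt : Set (GL (Fin 3) E)) = muSet (s * lm) E ∧
      Nat.card ((Lt : Set (GL (Fin 3) E)) ∩ CmSet m : Set (GL (Fin 3) E)) = lm := by
  classical
  have hm0 : m ≠ 0 := by
    rintro rfl
    simp at hm
  have hc : ∀ N ∈ Lb, ∀ u : Eˣ, Commute N (dg u) := fun N hN u => pi_comm (hLb N hN) u
  set S : Subgroup Eˣ := Lb.map Matrix.GeneralLinearGroup.det with hS
  have hScard : Nat.card S = s := by
    rw [← hs]
    have : ((fun N : GL (Fin 3) E => (N : Matrix (Fin 3) (Fin 3) E).det)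
        '' (Lb : Set (GL (Fin 3) E)) : Set E) = Units.val '' (S : Set Eˣ) := by
      rw [hS, Subgroup.coe_map, Set.image_image]
      rfl
    rw [this, Nat.card_image_of_injective Units.val_injective]
    rfl
  set H : Subgroup Eˣ := L.comap dg ⊓ rootsOfUnity m E with hH
  have hHcard : Nat.card H = lm := by
    rw [← hlm]
    have : ((L : Set (GL (Fin 3) E)) ∩ CmSet m) = dg '' (H : Set Eˣ) := by
      ext M
      rw [Set.mem_inter_iff, mem_CmSet_iff hm0]
      constructor
      · rintro ⟨hML, u, hu, rfl⟩
        exact ⟨u, ⟨hML, hu⟩, rfl⟩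
      · rintro ⟨u, ⟨hML, hu⟩, rfl⟩
        exact ⟨hML, u, hu, rfl⟩
    rw [this, Nat.card_image_of_injective dg_inj]
    rfl
  have hdvd : lm ∣ m := hHcard ▸ card_dvd_of_pow H m fun u hu => hu.2
  obtain ⟨k, rfl⟩ := hdvd
  have hlm0 : 0 < lm := Nat.pos_of_ne_zero fun h0 => hm0 (by simp [h0])
  rw [Nat.mul_div_cancel_left k hlm0] at hgcd
  have hmemS : ∀ u : Eˣ, u ∈ S ↔ u ^ s = 1 := fun u => hScard ▸ mem_iff_pow_card S u
  have hmemH : ∀ u : Eˣ, u ∈ H ↔ u ^ lm = 1 := fun u => hHcard ▸ mem_iff_pow_card H u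
  refine ⟨liftGroup (lm * k) (s * lm) Lb hc, ?_, ?_, ?_, ?_⟩
  · rintro _ ⟨N, hN, u, hu, -, rfl⟩
    exact mul_mem_GSet hm (hLb N hN) u hu
  · ext A
    constructor
    · rintro ⟨_, ⟨N, hN, u, hu, -, rfl⟩, rfl⟩
      exact ⟨N, hN, (pi_mul (hLb N hN) u).symm⟩
    · rintro ⟨N, hN, rfl⟩
      obtain ⟨a, c, ξ, -, -, -, -, -, hdet⟩ := pi_form (hLb N hN)
      have hξ : ξ ^ (lm * k) = Matrix.GeneralLinearGroup.det N := by
        ext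
        simpa using hdet.symm
      obtain ⟨v, hv, hv'⟩ := exists_adjust lm k s hgcd ξ
        ((hmemS _).1 (hξ ▸ Subgroup.mem_map_of_mem _ hN))
      exact ⟨N * dg v, ⟨N, hN, v, hv.trans hξ, hv', rfl⟩, pi_mul (hLb N hN) v⟩
  · ext x
    constructor
    · rintro ⟨_, ⟨N, hN, u, -, hu, rfl⟩, rfl⟩
      rw [rho_mul (hLb N hN) u]
      simpa [muSet] using congrArg Units.val hu
    · intro hx
      change x ^ (s * lm) = 1 at hx
      have hs0 : s ≠ 0 := hScard ▸ Nat.card_pos.ne'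
      have hx0 : x ≠ 0 := by
        rintro rfl
        simp [hs0, hlm0.ne'] at hx
      lift x to Eˣ using hx0.isUnit
      have hx' : x ^ (s * lm) = 1 := by
        ext
        simpa using hx
      have hxS : x ^ (lm * k) ∈ S := by
        rw [hmemS, ← pow_mul, show lm * k * s = s * lm * k by ring, pow_mul, hx', one_pow]
      obtain ⟨N, hN, hNx⟩ := hxS
      exact ⟨N * dg x, ⟨N, hN, x, hNx.symm, hx', rfl⟩, rho_mul (hLb N hN) x⟩
  · have : ((liftGroup (lm * k) (s * lm) Lb hc : Set (GL (Fin 3) E)) ∩ CmSet (lm * k))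
        = dg '' (H : Set Eˣ) := by
      ext M
      rw [Set.mem_inter_iff, mem_CmSet_iff hm0]
      constructor
      · rintro ⟨⟨N, hN, u, -, hu, rfl⟩, v, hv, hvu⟩
        have huv : v = u := by
          have h1 := rho_mul (hLb N hN) u
          rw [← hvu, rhoFun, dg_val] at h1
          ext
          simpa using h1
        subst huv
        refine ⟨v, (hmemH v).2 ?_, hvu⟩
        have h2 := Nat.dvd_gcd (orderOf_dvd_of_pow_eq_one hu) (orderOf_dvd_of_pow_eq_one hv)
        rw [mul_comm lm k, Nat.gcd_mul_right, hgcd, one_mul] at h2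
        exact orderOf_dvd_iff_pow_eq_one.1 h2
      · rintro ⟨u, hu, rfl⟩
        have hu1 : u ^ (lm * k) = 1 := hu.2
        have hu2 : u ^ lm = 1 := (hmemH u).1 hu
        exact ⟨⟨1, Lb.one_mem, u, by rw [hu1, map_one],
          by rw [mul_comm, pow_mul, hu2, one_pow], by simp⟩, u, hu1, rfl⟩
    rw [this, Nat.card_image_of_injective dg_inj]
    exact hHcard
end

section
/- Let f ≤ h and let w be a divisor of q+1. Let L̄ ≤ M_ℓ be a subgroup such that |L̄ ∩ Z| = w and L̄ is the internal direct product of L̄ ∩ Z and an elementary abelian 2-subgroup E of order 2^f (i.e. L̄ is generated by E and L̄ ∩ Z, and E ∩ (L̄ ∩ Z) is trivial). Then the number N of orbits of L̄ acting on O equals q/2^f + 1 + (q/2^f)·(q²−1)/w. -/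
/-!
The number of orbits is computed with Burnside's lemma (`burnside`).

Since `E ∩ (L ∩ Z)` is trivial and `Z` commutes with `M_ℓ`, every element of `L` is uniquely a
product `e * z` with `e ∈ E` and `z = diag(ε, ε, 1) ∈ L ∩ Z`; hence `|L| = 2 ^ f * w`. As the
characteristic is `2`, the condition `e² = 1` forces `e = [a, c, 1]` with `a ^ q = a` and
`a² + c ^ (q + 1) = 1` (`isNice_of_sq`), and `e = 1` exactly if `c = 0`.

The curve consists of the `q³ - q` affine points `(x : y : 1)` with
`x ^ (q + 1) + y ^ (q + 1) = 1` (`card_affine`) and the `q + 1` points `(u : 1 : 0)` with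
`u ^ (q + 1) = 1` (`ptsMap_bijective`). An element `e * z ≠ 1` fixes no affine point: applying it
twice gives `ε² = 1`, so `ε = 1`, and a vector fixed by `e ≠ 1` is isotropic
(`IsNice.affine_fixed`). The point `(u : 1 : 0)` is fixed exactly if `c ^ q = c * u²`, which holds
for all `u` if `c = 0`, and otherwise for a single `u`, since squaring is bijective
(`IsNice.card_inf`).

Summing the fixed points over `L` gives
`(q³ - q) + w * q + 2 ^ f * w = N * (2 ^ f * w)`, which is the claim.
-/

open Matrix

noncomputable def glAct {F : Type*} [Field F] (M : GL (Fin 3) F)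
    (x : Projectivization F (Fin 3 → F)) : Projectivization F (Fin 3 → F) :=
  Projectivization.map
    ((LinearMap.GeneralLinearGroup.generalLinearEquiv F (Fin 3 → F)
        (Matrix.GeneralLinearGroup.toLin M)).toLinearMap)
    ((LinearMap.GeneralLinearGroup.generalLinearEquiv F (Fin 3 → F)
        (Matrix.GeneralLinearGroup.toLin M)).injective) x

noncomputable def numOrbits {F : Type*} [Field F] (L : Subgroup (GL (Fin 3) F))
    (O : Set (Projectivization F (Fin 3 → F))) : ℕ :=
  Nat.card ((fun x => {y | ∃ g ∈ L, glAct g x = y}) '' O :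
    Set (Set (Projectivization F (Fin 3 → F))))

def hermitianPts (q : ℕ) (F : Type*) [Field F] : Set (Projectivization F (Fin 3 → F)) :=
  {x | x.rep 1 ^ (q + 1) = x.rep 0 ^ (q + 1) - x.rep 2 ^ (q + 1)}

def MlSet (q : ℕ) (F : Type*) [Field F] : Set (GL (Fin 3) F) :=
  {M | ∃ a c τ : F, a ^ (q + 1) - c ^ (q + 1) = 1 ∧ τ ^ (q + 1) = 1 ∧
    (M : Matrix (Fin 3) (Fin 3) F) = !![a, τ * c ^ q, 0; c, τ * a ^ q, 0; 0, 0, 1]}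

def ZSet (q : ℕ) (F : Type*) [Field F] : Set (GL (Fin 3) F) :=
  {M | ∃ ε : F, ε ^ (q + 1) = 1 ∧ (M : Matrix (Fin 3) (Fin 3) F) = Matrix.diagonal ![ε, ε, 1]}

/-! ### The norm map of `F` over its subfield of order `q` -/

section FieldLemmas

variable {F : Type*} [Field F] [Fintype F] {q : ℕ}

lemma pow_q_pow_q (hF : Fintype.card F = q ^ 2) (x : F) : (x ^ q) ^ q = x := by
  rw [← pow_mul, ← sq, ← hF, FiniteField.pow_card]

lemma add_pow_q {F : Type*} [Field F] [CharP F 2] {h : ℕ} (hq : q = 2 ^ h) (x y : F) :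
    (x + y) ^ q = x ^ q + y ^ q := by
  subst hq; exact add_pow_char_pow x y 2 h

/-- Every nonzero element of the subfield of order `q` is the norm of exactly `q + 1` elements: in
the cyclic group `Fˣ` the image of `x ↦ x ^ (q + 1)` is the subgroup of order `q - 1`. -/
lemma card_norm_fiber (hF : Fintype.card F = q ^ 2) (hq : 2 ≤ q) {t : F} (ht : t ≠ 0)
    (htq : t ^ q = t) : Nat.card {x : F // x ^ (q + 1) = t} = q + 1 := by
  classical
  obtain ⟨m, rfl⟩ : ∃ m, q = m + 1 := ⟨q - 1, by omega⟩
  have hcard : Nat.card Fˣ = m * (m + 1 + 1) := by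
    rw [Nat.card_eq_fintype_card, Fintype.card_units, hF]
    have : (m + 1) ^ 2 = m * (m + 1 + 1) + 1 := by ring
    omega
  have hker : Nat.card (powMonoidHom (m + 1 + 1) : Fˣ →* Fˣ).ker = m + 1 + 1 := by
    rw [IsCyclic.card_powMonoidHom_ker, hcard]; simp
  have hker' : Nat.card (powMonoidHom m : Fˣ →* Fˣ).ker = m := by
    rw [IsCyclic.card_powMonoidHom_ker, hcard]; simp
  have hrange : Nat.card (powMonoidHom (m + 1 + 1) : Fˣ →* Fˣ).range = m := by
    rw [IsCyclic.card_powMonoidHom_range, hcard]; simp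
  have hle : (powMonoidHom (m + 1 + 1) : Fˣ →* Fˣ).range ≤ (powMonoidHom m : Fˣ →* Fˣ).ker := by
    rintro _ ⟨y, rfl⟩
    rw [MonoidHom.mem_ker, powMonoidHom_apply, powMonoidHom_apply, ← pow_mul, mul_comm, ← hcard,
      pow_card_eq_one']
  have heq := Subgroup.eq_of_le_of_card_ge hle (by rw [hker', hrange])
  have hmem : Units.mk0 t ht ∈ (powMonoidHom m : Fˣ →* Fˣ).ker := by
    rw [MonoidHom.mem_ker, powMonoidHom_apply]
    ext
    have : t * t ^ m = t * 1 := by rw [mul_one, ← pow_succ', htq]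
    simpa using mul_left_cancel₀ ht this
  rw [← heq] at hmem
  obtain ⟨y, hy⟩ := hmem
  have hy' : (y : F) ^ (m + 1 + 1) = t := by
    have := congrArg Units.val hy
    simpa using this
  refine Eq.trans (Eq.symm ?_) hker
  refine Nat.card_congr (Equiv.ofBijective
    (fun k => ⟨(k.1 : F) * y, ?_⟩) ⟨?_, ?_⟩)
  · have h1 : (k.1 : F) ^ (m + 1 + 1) = 1 := by
      have := congrArg Units.val (MonoidHom.mem_ker.1 k.2)
      simpa using this
    rw [mul_pow, h1, one_mul, hy']
  · intro a b hab
    have := congrArg Subtype.val hab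
    exact Subtype.ext (Units.ext (mul_right_cancel₀ y.ne_zero this))
  · rintro ⟨x, hx⟩
    have hx0 : x ≠ 0 := by
      rintro rfl
      exact ht (by rw [← hx]; simp)
    refine ⟨⟨Units.mk0 x hx0 * y⁻¹, ?_⟩, ?_⟩
    · rw [MonoidHom.mem_ker, powMonoidHom_apply]
      ext
      simp only [Units.val_pow_eq_pow_val, Units.val_mul, Units.val_mk0, mul_pow, hx, Units.val_one,
        Units.val_inv_eq_inv_val, inv_pow, hy']
      exact mul_inv_cancel₀ ht
    · ext; simp

/-- The affine part of the Hermitian curve has `q³ - q` points. -/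
lemma card_affine [CharP F 2] {h : ℕ} (hh : 1 ≤ h) (hq : q = 2 ^ h)
    (hF : Fintype.card F = q ^ 2) :
    Nat.card {p : F × F // p.1 ^ (q + 1) + p.2 ^ (q + 1) = 1} + q = q ^ 3 := by
  classical
  have hq2 : 2 ≤ q := by
    rw [hq]; calc 2 = 2 ^ 1 := rfl
      _ ≤ 2 ^ h := Nat.pow_le_pow_right (by norm_num) hh
  have e : {p : F × F // p.1 ^ (q + 1) + p.2 ^ (q + 1) = 1} ≃
      Σ c : F, {a : F // a ^ (q + 1) = 1 + c ^ (q + 1)} :=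
    { toFun := fun p => ⟨p.1.2, p.1.1, by
        have := p.2
        grind [CharTwo.add_self_eq_zero (p.1.2 ^ (q + 1))]⟩
      invFun := fun s => ⟨(s.2.1, s.1), by
        simp only [s.2.2]; rw [add_assoc, CharTwo.add_self_eq_zero, add_zero]⟩
      left_inv := fun p => rfl
      right_inv := fun s => rfl }
  have hfib : ∀ c : F, Nat.card {a : F // a ^ (q + 1) = 1 + c ^ (q + 1)} +
      (if c ^ (q + 1) = 1 then q else 0) = q + 1 := by
    intro c
    split_ifs with hc
    · have : Nat.card {a : F // a ^ (q + 1) = 1 + c ^ (q + 1)} = 1 := by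
        rw [hc, CharTwo.add_self_eq_zero]
        rw [Nat.card_eq_one_iff_exists]
        exact ⟨⟨0, by simp⟩, fun b => Subtype.ext (by simpa using b.2)⟩
      rw [this, add_comm]
    · rw [add_zero]
      refine card_norm_fiber hF hq2 ?_ ?_
      · intro h0
        exact hc (CharTwo.add_eq_zero.1 h0).symm
      · rw [add_pow_q hq, one_pow, pow_succ, mul_pow, pow_q_pow_q hF, mul_comm]
  have hsum := Finset.sum_congr (rfl : (Finset.univ : Finset F) = _) (fun c _ => hfib c)
  have h1 : ∑ c : F, (if c ^ (q + 1) = 1 then q else 0) = (q + 1) * q := by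
    rw [← Finset.sum_filter, Finset.sum_const, smul_eq_mul]
    congr 1
    have := card_norm_fiber hF hq2 (one_ne_zero) (one_pow q)
    rwa [Nat.card_eq_fintype_card, Fintype.card_subtype] at this
  rw [Finset.sum_add_distrib, h1, Finset.sum_const, Finset.card_univ, hF, smul_eq_mul] at hsum
  rw [Nat.card_congr e, Nat.card_sigma]
  nlinarith

end FieldLemmas

/-! ### The action on points -/

section Points

variable {F : Type*} [Field F]

lemma glAct_mk (g : GL (Fin 3) F) (v : Fin 3 → F) (hv : v ≠ 0) :
    ∃ hw : (g : Matrix (Fin 3) (Fin 3) F) *ᵥ v ≠ 0,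
      glAct g (Projectivization.mk F v hv) =
        Projectivization.mk F ((g : Matrix (Fin 3) (Fin 3) F) *ᵥ v) hw := by
  refine ⟨?_, ?_⟩
  · intro h0
    exact hv ((Matrix.GeneralLinearGroup.toLin g).toLinearEquiv.injective
      (by simpa using h0))
  · rfl

lemma glAct_one (x : Projectivization F (Fin 3 → F)) : glAct 1 x = x := by
  induction x using Projectivization.ind with
  | h v hv =>
    obtain ⟨hw, e⟩ := glAct_mk 1 v hv
    rw [e]
    simp

lemma glAct_mul (g g' : GL (Fin 3) F) (x : Projectivization F (Fin 3 → F)) :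
    glAct (g * g') x = glAct g (glAct g' x) := by
  induction x using Projectivization.ind with
  | h v hv =>
    obtain ⟨hw, e⟩ := glAct_mk (g * g') v hv
    obtain ⟨hw', e'⟩ := glAct_mk g' v hv
    obtain ⟨hw'', e''⟩ := glAct_mk g _ hw'
    rw [e, e', e'']
    simp

lemma mk_mem_hermitianPts (q : ℕ) (v : Fin 3 → F) (hv : v ≠ 0) :
    Projectivization.mk F v hv ∈ hermitianPts q F ↔
      v 1 ^ (q + 1) = v 0 ^ (q + 1) - v 2 ^ (q + 1) := by
  obtain ⟨a, ha⟩ := Projectivization.exists_smul_eq_mk_rep F v hv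
  have ha0 : (a : F) ^ (q + 1) ≠ 0 := pow_ne_zero _ a.ne_zero
  have hi : ∀ i, (Projectivization.mk F v hv).rep i = a * v i := by
    intro i; rw [← ha]; rfl
  simp only [hermitianPts, Set.mem_ofPred_eq, hi, mul_pow, ← mul_sub]
  exact mul_right_inj' ha0

/-- The point `(x : y : 1)`. -/
def affPt (x y : F) : Projectivization F (Fin 3 → F) :=
  Projectivization.mk F ![x, y, 1] (fun h => one_ne_zero (α := F) (by simpa using congrFun h 2))

/-- The point `(u : 1 : 0)`. -/
def infPt (u : F) : Projectivization F (Fin 3 → F) :=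
  Projectivization.mk F ![u, 1, 0] (fun h => one_ne_zero (α := F) (by simpa using congrFun h 1))

lemma affPt_inj {x y x' y' : F} : affPt x y = affPt x' y' ↔ x = x' ∧ y = y' := by
  refine ⟨fun h => ?_, by rintro ⟨rfl, rfl⟩; rfl⟩
  obtain ⟨a, ha⟩ := (Projectivization.mk_eq_mk_iff' F _ _ _ _).1 h
  have h0 := congrFun ha 0
  have h1 := congrFun ha 1
  have h2 := congrFun ha 2
  simp at h0 h1 h2
  subst h2
  simp at h0 h1
  exact ⟨h0.symm, h1.symm⟩

lemma affPt_ne_infPt {x y u : F} : affPt x y ≠ infPt u := by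
  intro h
  obtain ⟨a, ha⟩ := (Projectivization.mk_eq_mk_iff' F _ _ _ _).1 h
  simpa using congrFun ha 2

lemma mk_eq_infPt_iff {x y u : F} (hv : ![x, y, 0] ≠ 0) :
    Projectivization.mk F ![x, y, 0] hv = infPt u ↔ x = u * y := by
  unfold infPt
  rw [Projectivization.mk_eq_mk_iff']
  constructor
  · rintro ⟨a, ha⟩
    have h0 := congrFun ha 0
    have h1 := congrFun ha 1
    simp at h0 h1
    rw [← h0, ← h1, mul_comm]
  · intro h
    refine ⟨y, ?_⟩
    ext i
    fin_cases i <;> simp [h, mul_comm]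

lemma infPt_inj {u u' : F} : infPt u = infPt u' ↔ u = u' := by
  have := mk_eq_infPt_iff (x := u) (y := 1) (u := u')
    (fun h => one_ne_zero (α := F) (by simpa using congrFun h 1))
  rwa [mul_one] at this

lemma affPt_mem [CharP F 2] {q : ℕ} {x y : F} :
    affPt x y ∈ hermitianPts q F ↔ x ^ (q + 1) + y ^ (q + 1) = 1 := by
  unfold affPt
  rw [mk_mem_hermitianPts]
  simp only [CharTwo.sub_eq_add]
  simp
  have := CharTwo.add_self_eq_zero (x ^ (q + 1))
  have := CharTwo.add_self_eq_zero (1 : F)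
  constructor <;> intro h <;> grind

lemma infPt_mem {q : ℕ} {u : F} :
    infPt u ∈ hermitianPts q F ↔ u ^ (q + 1) = 1 := by
  unfold infPt
  rw [mk_mem_hermitianPts]
  simp [eq_comm]

/-- The points of the Hermitian curve, split into the affine part and the part on the line
`Z = 0`. -/
def ptsMap [CharP F 2] (q : ℕ) :
    {p : F × F // p.1 ^ (q + 1) + p.2 ^ (q + 1) = 1} ⊕ {u : F // u ^ (q + 1) = 1} →
      hermitianPts q F
  | Sum.inl p => ⟨affPt p.1.1 p.1.2, affPt_mem.2 p.2⟩
  | Sum.inr u => ⟨infPt u.1, infPt_mem.2 u.2⟩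

lemma ptsMap_bijective [CharP F 2] (q : ℕ) : Function.Bijective (ptsMap (F := F) q) := by
  constructor
  · rintro (p | u) (p' | u') h
    · have := affPt_inj.1 (congrArg Subtype.val h)
      congr 1
      exact Subtype.ext (Prod.ext this.1 this.2)
    · exact absurd (congrArg Subtype.val h) affPt_ne_infPt
    · exact absurd (congrArg Subtype.val h).symm affPt_ne_infPt
    · have := infPt_inj.1 (congrArg Subtype.val h)
      congr 1
      exact Subtype.ext this
  · rintro ⟨x, hx⟩
    suffices (∃ a b, affPt a b = x) ∨ ∃ u, infPt u = x by
      obtain ⟨a, b, rfl⟩ | ⟨u, rfl⟩ := this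
      · exact ⟨Sum.inl ⟨(a, b), affPt_mem.1 hx⟩, rfl⟩
      · exact ⟨Sum.inr ⟨u, infPt_mem.1 hx⟩, rfl⟩
    induction x using Projectivization.ind with
    | h v hv =>
      rw [mk_mem_hermitianPts] at hx
      by_cases h2 : v 2 = 0
      · right
        have h1 : v 1 ≠ 0 := by
          intro h1
          apply hv
          rw [h1, h2] at hx
          have hx' : v 0 = 0 := by simpa using hx.symm
          ext i
          fin_cases i <;> simp [hx', h1, h2]
        refine ⟨v 0 / v 1, (Projectivization.mk_eq_mk_iff' F _ _ _ _).2 ⟨(v 1)⁻¹, ?_⟩⟩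
        ext i
        fin_cases i <;> simp [h1, h2, div_eq_inv_mul]
      · left
        refine ⟨v 0 / v 2, v 1 / v 2,
          (Projectivization.mk_eq_mk_iff' F _ _ _ _).2 ⟨(v 2)⁻¹, ?_⟩⟩
        ext i
        fin_cases i <;> simp [h2, div_eq_inv_mul]

end Points

/-! ### Fixed points of the elements of the group -/

section Fixed

variable {F : Type*} [Field F] [CharP F 2] {h q : ℕ}

/-- The shape of an element `e * diag(ε, ε, 1)` with `e = [a, c, 1]` an element of `M_ℓ`
satisfying `e² = 1`. -/
structure IsNice {F : Type*} [Field F] (q : ℕ) (g : GL (Fin 3) F) (ε a c : F) : Prop where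
  eps : ε ^ (q + 1) = 1
  frob : a ^ q = a
  norm : a ^ 2 + c ^ (q + 1) = 1
  coe : (g : Matrix (Fin 3) (Fin 3) F) = !![ε * a, ε * c ^ q, 0; ε * c, ε * a, 0; 0, 0, 1]

lemma eq_one_of_sq {x : F} (hx : x ^ 2 = 1) : x = 1 := by
  have h0 : (x + 1) ^ 2 = 0 := by
    rw [CharTwo.add_sq, hx, one_pow, CharTwo.add_self_eq_zero]
  exact CharTwo.add_eq_zero.1 (pow_eq_zero_iff two_ne_zero |>.1 h0)

/-- An element of `M_ℓ` whose square is `1` has `τ = 1` and `a` in the subfield of order `q`. -/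
lemma isNice_of_sq {g : GL (Fin 3) F} (hg : g ∈ MlSet q F) (hg2 : g ^ 2 = 1) :
    ∃ a c, IsNice q g 1 a c := by
  obtain ⟨a, c, τ, hN, hτ, hM⟩ := hg
  have hsq : (g : Matrix (Fin 3) (Fin 3) F) * (g : Matrix (Fin 3) (Fin 3) F) = 1 := by
    rw [← Units.val_mul, ← sq, hg2, Units.val_one]
  have hdet : τ ^ 2 = 1 := by
    have h1 := congrArg Matrix.det hsq
    rw [Matrix.det_mul, hM, Matrix.det_one] at h1
    have h2 : (!![a, τ * c ^ q, 0; c, τ * a ^ q, 0; 0, 0, 1] : Matrix (Fin 3) (Fin 3) F).det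
        = τ * (a ^ (q + 1) - c ^ (q + 1)) := by
      rw [Matrix.det_fin_three]; simp; ring
    rw [h2, hN, mul_one] at h1
    rw [sq, h1]
  have hτ1 := eq_one_of_sq hdet
  subst hτ1
  rw [hM] at hsq
  have h00 := congrFun (congrFun hsq 0) 0
  have h10 := congrFun (congrFun hsq 1) 0
  simp [Matrix.mul_apply, Fin.sum_univ_three] at h00 h10
  have hn : a ^ 2 + c ^ (q + 1) = 1 := by rw [← h00]; ring
  have hfr : a ^ q = a := by
    by_cases hc : c = 0
    · subst hc
      have : a = 1 := eq_one_of_sq (by simpa using hn)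
      rw [this, one_pow]
    · have : c * (a + a ^ q) = 0 := by rw [← h10]; ring
      exact (CharTwo.add_eq_zero.1 ((mul_eq_zero.1 this).resolve_left hc)).symm
  refine ⟨a, c, by simp, hfr, hn, ?_⟩
  rw [hM]
  simp [hfr]

lemma IsNice.mul_diag {F : Type*} [Field F] {e z : GL (Fin 3) F} {a c ε : F} (he : IsNice q e 1 a c)
    (hε : ε ^ (q + 1) = 1) (hz : (z : Matrix (Fin 3) (Fin 3) F) = Matrix.diagonal ![ε, ε, 1]) :
    IsNice q (e * z) ε a c := by
  refine ⟨hε, he.frob, he.norm, ?_⟩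
  rw [Units.val_mul, he.coe, hz]
  ext i j
  fin_cases i <;> fin_cases j <;> simp [Matrix.mul_apply, Fin.sum_univ_three, mul_comm]

lemma IsNice.eq_one_iff {e : GL (Fin 3) F} {a c : F} (he : IsNice q e 1 a c)
    (hq0 : q ≠ 0) : e = 1 ↔ c = 0 := by
  constructor
  · intro h1
    have := he.coe
    rw [h1] at this
    simpa using (congrFun (congrFun this 1) 0).symm
  · intro hc
    have ha : a = 1 := eq_one_of_sq (by simpa [hc] using he.norm)
    ext i j
    rw [he.coe, hc, ha]
    fin_cases i <;> fin_cases j <;> simp [hq0]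

lemma IsNice.mulVec {F : Type*} [Field F] {g : GL (Fin 3) F} {ε a c : F} (hg : IsNice q g ε a c) (v : Fin 3 → F) :
    (g : Matrix (Fin 3) (Fin 3) F) *ᵥ v =
      ![ε * (a * v 0 + c ^ q * v 1), ε * (c * v 0 + a * v 1), v 2] := by
  rw [hg.coe]
  ext i
  fin_cases i <;> simp [Matrix.mulVec, dotProduct, Fin.sum_univ_three] <;> ring

lemma IsNice.glAct_affPt {F : Type*} [Field F] {g : GL (Fin 3) F} {ε a c : F} (hg : IsNice q g ε a c)
    (x y : F) :
    glAct g (affPt x y) = affPt (ε * (a * x + c ^ q * y)) (ε * (c * x + a * y)) := by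
  unfold affPt
  obtain ⟨hw, e⟩ := glAct_mk g ![x, y, 1]
    (fun h => one_ne_zero (α := F) (by simpa using congrFun h 2))
  rw [e]
  congr 1
  rw [hg.mulVec]
  simp

lemma IsNice.glAct_infPt_eq {F : Type*} [Field F] {g : GL (Fin 3) F} {ε a c : F} (hg : IsNice q g ε a c)
    (u : F) :
    glAct g (infPt u) = infPt u ↔ c ^ q = c * u ^ 2 := by
  have hε : ε ≠ 0 := by
    rintro rfl
    simpa using hg.eps
  obtain ⟨hw, e⟩ := glAct_mk g ![u, 1, 0]
    (fun h => one_ne_zero (α := F) (by simpa using congrFun h 1))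
  have hv : (g : Matrix (Fin 3) (Fin 3) F) *ᵥ ![u, 1, 0] =
      ![ε * (a * u + c ^ q), ε * (c * u + a), 0] := by
    rw [hg.mulVec]; simp
  have e' : glAct g (infPt u) = Projectivization.mk F
      ![ε * (a * u + c ^ q), ε * (c * u + a), 0] (hv ▸ hw) := by
    unfold infPt
    rw [e]
    congr 1
  rw [e', mk_eq_infPt_iff, mul_left_comm, mul_right_inj' hε]
  constructor <;> intro h <;> linear_combination h

lemma IsNice.mem [Fintype F] (hF : Fintype.card F = q ^ 2) (hq : q = 2 ^ h)
    {g : GL (Fin 3) F} {ε a c : F} (hg : IsNice q g ε a c)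
    {x : Projectivization F (Fin 3 → F)} (hx : x ∈ hermitianPts q F) :
    glAct g x ∈ hermitianPts q F := by
  induction x using Projectivization.ind with
  | h v hv =>
    obtain ⟨hw, e⟩ := glAct_mk g v hv
    rw [mk_mem_hermitianPts] at hx
    rw [e, mk_mem_hermitianPts, hg.mulVec]
    have h2 : (2 : F) = 0 := CharTwo.two_eq_zero
    simp only [Matrix.cons_val, Matrix.cons_val_zero, Matrix.cons_val_one, mul_pow ε, hg.eps,
      one_mul]
    have hn := hg.norm
    simp only [pow_succ _ q] at hx hn ⊢
    simp only [add_pow_q hq, mul_pow, hg.frob, pow_q_pow_q hF]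
    linear_combination (a ^ 2 - c ^ q * c) * hx - v 2 ^ q * v 2 * hn +
      c ^ q * c * v 2 ^ q * v 2 * h2

/-- No point of the affine part of the curve is fixed by `g ≠ 1`; here `c = 0 ∧ ε = 1` says that
`g = 1`. -/
lemma IsNice.affine_fixed (hq : q = 2 ^ h)
    {g : GL (Fin 3) F} {ε a c : F} (hg : IsNice q g ε a c) {x y : F}
    (hxy : x ^ (q + 1) + y ^ (q + 1) = 1) :
    glAct g (affPt x y) = affPt x y ↔ (c = 0 ∧ ε = 1) := by
  have h2 : (2 : F) = 0 := CharTwo.two_eq_zero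
  rw [hg.glAct_affPt, affPt_inj]
  constructor
  · rintro ⟨h0, h1⟩
    have hn := hg.norm
    -- `A² = 1` for the upper left block `A` of `e`, so that `ε² (x, y) = (x, y)`
    have hn' : a ^ 2 + c ^ q * c = 1 := by rw [← pow_succ]; exact hn
    have hx : ε ^ 2 * x = x := by
      linear_combination (ε * a) * h0 + ε * c ^ q * h1 + h0 - ε ^ 2 * x * hn' -
        ε ^ 2 * a * c ^ q * y * h2
    have hy : ε ^ 2 * y = y := by
      linear_combination ε * c * h0 + ε * a * h1 + h1 - ε ^ 2 * y * hn' - ε ^ 2 * a * c * x * h2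
    have hε : ε = 1 := by
      apply eq_one_of_sq
      by_cases hx0 : x = 0
      · have hy0 : y ≠ 0 := by
          rintro rfl
          simp [hx0] at hxy
        exact mul_right_cancel₀ hy0 (by rw [hy, one_mul])
      · exact mul_right_cancel₀ hx0 (by rw [hx, one_mul])
    subst hε
    refine ⟨?_, rfl⟩
    by_contra hc
    have e1 : c * x = (a + 1) * y := by linear_combination h1 - a * y * h2
    have e2 : (c * x) ^ (q + 1) = ((a + 1) * y) ^ (q + 1) := by rw [e1]
    have e3 : (a + 1) ^ (q + 1) = c ^ (q + 1) := by
      rw [pow_succ, add_pow_q hq, hg.frob, one_pow]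
      linear_combination hn + (a + 1 - c ^ (q + 1)) * h2
    rw [mul_pow, mul_pow, e3] at e2
    have e4 := mul_left_cancel₀ (pow_ne_zero _ hc) e2
    rw [e4, CharTwo.add_self_eq_zero] at hxy
    exact zero_ne_one hxy
  · rintro ⟨rfl, rfl⟩
    have ha : a = 1 := eq_one_of_sq (by simpa using hg.norm)
    have hq0 : q ≠ 0 := by rw [hq]; positivity
    simp [ha, hq0]

/-- If `c = 0`, all `q + 1` points of the curve on the line `Z = 0` are fixed; if `c ≠ 0`, the only
fixed one is `(u : 1 : 0)` with `u² = c ^ (q - 1)`. -/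
lemma IsNice.card_inf [Fintype F] (hF : Fintype.card F = q ^ 2) (hh : 1 ≤ h) (hq : q = 2 ^ h)
    {g : GL (Fin 3) F} {ε a c : F} (hg : IsNice q g ε a c) [Decidable (c = 0)] :
    Nat.card {u : {u : F // u ^ (q + 1) = 1} // glAct g (infPt u.1) = infPt u.1} =
      if c = 0 then q + 1 else 1 := by
  have hq2 : 2 ≤ q := by
    rw [hq]; calc 2 = 2 ^ 1 := rfl
      _ ≤ 2 ^ h := Nat.pow_le_pow_right (by norm_num) hh
  simp only [hg.glAct_infPt_eq]
  split_ifs with hc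
  · refine Eq.trans ?_ (card_norm_fiber hF hq2 (one_ne_zero (α := F)) (one_pow q))
    refine Nat.card_congr (Equiv.subtypeUnivEquiv fun u => ?_)
    rw [hc, zero_mul, zero_pow (by omega)]
  · obtain ⟨u, hu⟩ : ∃ u : F, u ^ 2 = c ^ q / c := by
      obtain ⟨u, hu⟩ := surjective_frobenius F 2 (c ^ q / c)
      exact ⟨u, by simpa [frobenius_def] using hu⟩
    have hu1 : c ^ q = c * u ^ 2 := by rw [hu]; field_simp
    have hun : u ^ (q + 1) = 1 := by
      apply eq_one_of_sq
      rw [← pow_mul, mul_comm, pow_mul, hu, div_pow, pow_succ, pow_q_pow_q hF, pow_succ c q,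
        mul_comm c]
      exact div_self (by positivity)
    rw [Nat.card_eq_one_iff_exists]
    refine ⟨⟨⟨u, hun⟩, hu1⟩, ?_⟩
    rintro ⟨⟨u', _⟩, hu'⟩
    have : u' ^ 2 = u ^ 2 := mul_left_cancel₀ hc (by rw [← hu1, ← hu'])
    simp only [Subtype.mk.injEq]
    exact frobenius_inj F 2 (by simpa [frobenius_def] using this)

lemma IsNice.card_fixed [Fintype F] (hF : Fintype.card F = q ^ 2) (hh : 1 ≤ h) (hq : q = 2 ^ h)
    {g : GL (Fin 3) F} {ε a c : F} (hg : IsNice q g ε a c) [Decidable (c = 0)]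
    [Decidable (c = 0 ∧ ε = 1)] :
    Nat.card {x : hermitianPts q F // glAct g x.1 = x.1} =
      (if c = 0 ∧ ε = 1 then q ^ 3 - q else 0) + (if c = 0 then q + 1 else 1) := by
  have e1 : {s // glAct g (ptsMap q s).1 = (ptsMap q s).1} ≃
      {x : hermitianPts q F // glAct g x.1 = x.1} :=
    (Equiv.ofBijective _ (ptsMap_bijective q)).subtypeEquiv (fun s => Iff.rfl)
  rw [← Nat.card_congr e1, Nat.card_congr Equiv.subtypeSum, Nat.card_sum]
  congr 1
  · have h1 : ∀ p : {p : F × F // p.1 ^ (q + 1) + p.2 ^ (q + 1) = 1},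
        glAct g (ptsMap q (Sum.inl p)).1 = (ptsMap q (Sum.inl p)).1 ↔ (c = 0 ∧ ε = 1) :=
      fun p => hg.affine_fixed hq p.2
    simp only [h1]
    split_ifs with hc
    · rw [Nat.card_congr (Equiv.subtypeUnivEquiv fun _ => hc)]
      have := card_affine hh hq hF
      omega
    · simp [hc]
  · exact hg.card_inf hF hh hq

end Fixed

/-! ### Orbit counting -/

section Group

variable {F : Type*} [Field F] {q : ℕ}

/-- The group `L` acting on the points of the Hermitian curve. -/
@[reducible] noncomputable def actOnPts (L : Subgroup (GL (Fin 3) F))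
    (hL : ∀ g ∈ L, ∀ x ∈ hermitianPts q F, glAct g x ∈ hermitianPts q F) :
    MulAction L (hermitianPts q F) where
  smul g x := ⟨glAct g.1 x.1, hL g.1 g.2 x.1 x.2⟩
  one_smul x := Subtype.ext (glAct_one x.1)
  mul_smul g g' x := Subtype.ext (glAct_mul g.1 g'.1 x.1)

/-- Burnside's lemma for the orbit count `numOrbits`. -/
lemma burnside [Fintype F] (L : Subgroup (GL (Fin 3) F)) [Fintype L]
    (hL : ∀ g ∈ L, ∀ x ∈ hermitianPts q F, glAct g x ∈ hermitianPts q F) :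
    ∑ g : L, Nat.card {x : hermitianPts q F // glAct g.1 x.1 = x.1} =
      numOrbits L (hermitianPts q F) * Nat.card L := by
  classical
  let := actOnPts L hL
  let : Fintype (hermitianPts q F) := Fintype.ofFinite _
  have hb := MulAction.sum_card_fixedBy_eq_card_orbits_mul_card_group L (hermitianPts q F)
  have hfix : ∀ g : L, Nat.card {x : hermitianPts q F // glAct g.1 x.1 = x.1} =
      Fintype.card (MulAction.fixedBy (hermitianPts q F) g) := by
    intro g
    rw [← Nat.card_eq_fintype_card]
    refine Nat.card_congr (Equiv.subtypeEquivRight fun x => ?_)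
    exact (Subtype.ext_iff (a1 := g • x) (a2 := x)).symm
  simp only [hfix]
  rw [hb, ← Nat.card_eq_fintype_card, ← Nat.card_eq_fintype_card]
  congr 1
  unfold numOrbits
  -- the orbits as subsets of the plane are the images of the orbits in the curve
  let o : hermitianPts q F → Set (Projectivization F (Fin 3 → F)) :=
    fun x => {y | ∃ g ∈ L, glAct g x.1 = y}
  have ho : ∀ x y : hermitianPts q F,
      MulAction.orbitRel L (hermitianPts q F) x y ↔ o x = o y := by
    intro x y
    rw [MulAction.orbitRel_apply]
    constructor
    · rintro ⟨g, rfl⟩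
      ext z
      constructor
      · rintro ⟨k, hk, rfl⟩
        exact ⟨k * g, L.mul_mem hk g.2, glAct_mul _ _ _⟩
      · rintro ⟨k, hk, rfl⟩
        refine ⟨k * (g : GL (Fin 3) F)⁻¹, L.mul_mem hk (L.inv_mem g.2), ?_⟩
        change glAct _ (glAct g.1 y.1) = _
        rw [← glAct_mul, inv_mul_cancel_right]
    · intro hxy
      have hx : x.1 ∈ o x := ⟨1, L.one_mem, glAct_one _⟩
      rw [hxy] at hx
      obtain ⟨g, hg, hgx⟩ := hx
      exact ⟨⟨g, hg⟩, Subtype.ext hgx⟩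
  refine Nat.card_congr (Equiv.ofBijective
    (Quotient.lift (fun x => (⟨o x, x.1, x.2, rfl⟩ :
      ((fun x => {y | ∃ g ∈ L, glAct g x = y}) '' hermitianPts q F :
        Set (Set (Projectivization F (Fin 3 → F))))))
      (fun x y hxy => Subtype.ext ((ho x y).1 hxy))) ⟨?_, ?_⟩)
  · intro a b
    induction a using Quotient.inductionOn with | _ a => ?_
    induction b using Quotient.inductionOn with | _ b => ?_
    intro hab
    exact Quotient.sound ((ho a b).2 (congrArg Subtype.val hab))
  · rintro ⟨_, x, hx, rfl⟩
    exact ⟨Quotient.mk _ ⟨x, hx⟩, rfl⟩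

/-- The center `Z` as a subgroup. -/
def Zsub (q : ℕ) (F : Type*) [Field F] : Subgroup (GL (Fin 3) F) where
  carrier := ZSet q F
  one_mem' := ⟨1, by simp, by ext i j; fin_cases i <;> fin_cases j <;> simp⟩
  mul_mem' := by
    rintro g g' ⟨ε, hε, hg⟩ ⟨ε', hε', hg'⟩
    refine ⟨ε * ε', by rw [mul_pow, hε, hε', one_mul], ?_⟩
    rw [Units.val_mul, hg, hg', Matrix.diagonal_mul_diagonal]
    congr 1
    ext i; fin_cases i <;> simp
  inv_mem' := by
    rintro g ⟨ε, hε, hg⟩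
    have hε0 : ε ≠ 0 := by rintro rfl; simp at hε
    refine ⟨ε⁻¹, by rw [inv_pow, hε, inv_one], ?_⟩
    refine left_inv_eq_right_inv (a := (g : Matrix (Fin 3) (Fin 3) F)) (by simp) ?_
    rw [hg, Matrix.diagonal_mul_diagonal, ← Matrix.diagonal_one]
    congr 1
    ext i; fin_cases i <;> simp [hε0]

lemma ZSet_comm {g z : GL (Fin 3) F} (hg : g ∈ MlSet q F) (hz : z ∈ ZSet q F) :
    g * z = z * g := by
  obtain ⟨a, c, τ, -, -, hg⟩ := hg
  obtain ⟨ε, -, hz⟩ := hz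
  apply Units.ext
  rw [Units.val_mul, Units.val_mul, hg, hz]
  ext i j
  fin_cases i <;> fin_cases j <;> simp [mul_comm]

end Group

theorem stmt4 (h q f w : ℕ) (hh : 1 ≤ h) (hq : q = 2 ^ h)
    (F : Type*) [Field F] [Fintype F] (hF : Fintype.card F = q ^ 2)
    (hf : f ≤ h) (hw : w ∣ q + 1)
    (L : Subgroup (GL (Fin 3) F)) (hLMl : (L : Set (GL (Fin 3) F)) ⊆ MlSet q F)
    (hZcard : Nat.card ((L : Set (GL (Fin 3) F)) ∩ ZSet q F : Set (GL (Fin 3) F)) = w)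
    (E : Subgroup (GL (Fin 3) F))
    (hEcard : Nat.card E = 2 ^ f)
    (hEelem : ∀ g ∈ E, g ^ 2 = 1)
    (hgen : L = Subgroup.closure
      ((E : Set (GL (Fin 3) F)) ∪ ((L : Set (GL (Fin 3) F)) ∩ ZSet q F)))
    (htriv : (E : Set (GL (Fin 3) F)) ∩ ((L : Set (GL (Fin 3) F)) ∩ ZSet q F) ⊆ {1}) :
    (numOrbits L (hermitianPts q F) : ℚ)
      = (q : ℚ) / 2 ^ f + 1 + ((q : ℚ) / 2 ^ f) * (((q : ℚ) ^ 2 - 1) / (w : ℚ)) := by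
  classical
  have hchar : CharP F 2 :=
    charP_of_card_eq_prime_pow (p := 2) (f := h * 2) (by rw [hF, hq, pow_mul])
  have hq0 : q ≠ 0 := by rw [hq]; positivity
  have hw0 : w ≠ 0 := by rintro rfl; simp at hw
  set W : Subgroup (GL (Fin 3) F) := L ⊓ Zsub q F with hW
  have hWset : (W : Set (GL (Fin 3) F)) = (L : Set (GL (Fin 3) F)) ∩ ZSet q F := rfl
  rw [← hWset] at hZcard hgen htriv
  have hWcard : Nat.card W = w := hZcard
  have hEL : E ≤ L := fun g hg => by
    rw [hgen]; exact Subgroup.subset_closure (Or.inl hg)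
  have hWL : W ≤ L := inf_le_left
  have hcomm : ∀ e ∈ E, ∀ z ∈ W, e * z = z * e := fun e he z hz =>
    ZSet_comm (hLMl (hEL he)) hz.2
  -- `L` is the set of products `e * z`
  have hdec : ∀ g ∈ L, ∃ e ∈ E, ∃ z ∈ W, e * z = g := by
    intro g hg
    rw [hgen] at hg
    induction hg using Subgroup.closure_induction with
    | mem x hx =>
      rcases hx with hx | hx
      · exact ⟨x, hx, 1, W.one_mem, mul_one x⟩
      · exact ⟨1, E.one_mem, x, hx, one_mul x⟩
    | one => exact ⟨1, E.one_mem, 1, W.one_mem, mul_one 1⟩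
    | mul x y _ _ ihx ihy =>
      obtain ⟨e, he, z, hz, rfl⟩ := ihx
      obtain ⟨e', he', z', hz', rfl⟩ := ihy
      refine ⟨e * e', E.mul_mem he he', z * z', W.mul_mem hz hz', ?_⟩
      rw [mul_assoc e e', ← mul_assoc e' z, hcomm e' he' z hz]
      simp only [mul_assoc]
    | inv x _ ih =>
      obtain ⟨e, he, z, hz, rfl⟩ := ih
      refine ⟨e⁻¹, E.inv_mem he, z⁻¹, W.inv_mem hz, ?_⟩
      rw [hcomm e he z hz, _root_.mul_inv_rev]
  let m : E × W → L := fun p => ⟨p.1.1 * p.2.1, L.mul_mem (hEL p.1.2) (hWL p.2.2)⟩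
  have hm : Function.Bijective m := by
    constructor
    · rintro ⟨⟨e, he⟩, ⟨z, hz⟩⟩ ⟨⟨e', he'⟩, ⟨z', hz'⟩⟩ hp
      have hp' : e * z = e' * z' := congrArg Subtype.val hp
      have h1 : e'⁻¹ * e = z' * z⁻¹ := by
        rw [inv_mul_eq_iff_eq_mul, ← mul_assoc, ← hp', mul_inv_cancel_right]
      have h2 : e'⁻¹ * e = 1 := htriv ⟨E.mul_mem (E.inv_mem he') he,
        h1 ▸ W.mul_mem hz' (W.inv_mem hz)⟩
      have h3 : e = e' := (inv_mul_eq_one.1 h2).symm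
      subst h3
      have h4 : z = z' := mul_left_cancel hp'
      subst h4
      rfl
    · rintro ⟨g, hg⟩
      obtain ⟨e, he, z, hz, rfl⟩ := hdec g hg
      exact ⟨⟨⟨e, he⟩, ⟨z, hz⟩⟩, rfl⟩
  have hLcard : Nat.card L = 2 ^ f * w := by
    rw [← Nat.card_congr (Equiv.ofBijective m hm), Nat.card_prod, hEcard, hWcard]
  have hinv : ∀ g ∈ L, ∀ x ∈ hermitianPts q F, glAct g x ∈ hermitianPts q F := by
    intro g hg x hx
    obtain ⟨e, he, z, hz, rfl⟩ := hdec g hg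
    obtain ⟨a, c, hn⟩ := isNice_of_sq (hLMl (hEL he)) (hEelem e he)
    obtain ⟨ε, hε, hzε⟩ := hz.2
    exact (hn.mul_diag hε hzε).mem hF hq hx
  let _ : Fintype L := Fintype.ofFinite _
  let _ : Fintype E := Fintype.ofFinite _
  let _ : Fintype W := Fintype.ofFinite _
  have hb := burnside L hinv
  have hfix : ∀ p : E × W, Nat.card {x : hermitianPts q F // glAct (m p).1 x.1 = x.1} =
      (if p = 1 then q ^ 3 - q else 0) + ((if p.1 = 1 then q else 0) + 1) := by
    rintro ⟨⟨e, he⟩, ⟨z, hz⟩⟩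
    obtain ⟨a, c, hn⟩ := isNice_of_sq (hLMl (hEL he)) (hEelem e he)
    obtain ⟨ε, hε, hzε⟩ := hz.2
    have hz1 : z = 1 ↔ ε = 1 := by
      rw [← Units.val_inj, hzε]
      constructor
      · intro h1
        simpa using congrFun (congrFun h1 0) 0
      · rintro rfl
        ext i j; fin_cases i <;> fin_cases j <;> simp
    have := (hn.mul_diag hε hzε).card_fixed hF hh hq
    refine this.trans ?_
    have hp1 : ((⟨⟨e, he⟩, ⟨z, hz⟩⟩ : E × W) = 1) ↔ (c = 0 ∧ ε = 1) := by
      rw [Prod.ext_iff, ← hz1, ← hn.eq_one_iff hq0]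
      simp [Subtype.ext_iff]
    have he1 : ((⟨e, he⟩ : E) = 1) ↔ c = 0 := by
      rw [← hn.eq_one_iff hq0]
      simp [Subtype.ext_iff]
    simp only [hp1, he1]
    split_ifs <;> rfl
  rw [← (Equiv.ofBijective m hm).sum_comp] at hb
  simp only [Equiv.ofBijective_apply, hfix] at hb
  have hs : ∑ p : E × W, (if p.1 = 1 then q else 0) = w * q := by
    rw [Fintype.sum_prod_type, Finset.sum_comm]
    simp only [Finset.sum_ite_eq', Finset.mem_univ, if_true, Finset.sum_const, Finset.card_univ,
      ← Nat.card_eq_fintype_card, hWcard, smul_eq_mul]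
  rw [Finset.sum_add_distrib, Finset.sum_add_distrib, hs, hLcard] at hb
  simp only [Finset.sum_ite_eq', Finset.mem_univ, if_true, Finset.sum_const, Finset.card_univ,
    ← Nat.card_eq_fintype_card, Nat.card_prod, hEcard, hWcard, smul_eq_mul, mul_one] at hb
  have hqle : q ≤ q ^ 3 := Nat.le_self_pow (by norm_num) q
  have hbQ := congrArg (Nat.cast : ℕ → ℚ) hb
  push_cast [Nat.cast_sub hqle] at hbQ
  have hw0' : (w : ℚ) ≠ 0 := by exact_mod_cast hw0
  have h2f : (2 : ℚ) ^ f ≠ 0 := by positivity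
  field_simp
  linear_combination -hbQ
end
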